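/- Let 0 < q ≤ p ≤ +∞. Let μ and ν be non-negative Borel measures on I = (a,b) ⊆ ℝ, let w ∈ B⁺(I), and let u ∈ B⁺(I) satisfy ‖u‖_{q,[t,b),ν} < ∞ for all t ∈ I and u ≠ 0 ν-a.e. on (a,b). Then there exists a constant c > 0 such that ‖gw‖_{p,(a,b),μ} ≤ c ‖u(x) ‖g‖_{∞,(a,x),μ}‖_{q,(a,b),ν} for all g ∈ B⁺(I) if and only if B₁ := ‖ ‖w‖_{p,[x,b),μ} · ‖u‖_{q,(x,b),ν}^{−1} ‖_{∞,(a,b),μ} < ∞. Moreover, the best possible constant c satisfies c ≈ B₁, with equivalence constants depending only on p and q. -/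

import Mathlib

/-!
The lower bound `B₁ ≤ c` comes from testing with `g = 1_{[x,b)}`: then `‖g‖_{∞,(a,y),μ}` vanishes
for `y ≤ x` and is at most `1` for `y > x`, so `‖w‖_{p,[x,b)} ≤ c ‖u‖_{q,(x,b)}` for every `x`.

For the upper bound write `G(y) = ‖g‖_{∞,(a,y),μ}`, a monotone function. For `μ`-almost every `x`
one has `g(x) ≤ G(y)` for all `y > x` (`ae_le_eSup_Ioo`) and
`‖w‖_{p,[x,b)} ≤ B₁ ‖u‖_{q,(x,b)}`. If `p = ∞`, then almost everywhere
`g(x) w(x) ≤ g(x) ‖w‖_{∞,[x,b)} ≤ B₁ g(x) ‖u‖_{q,(x,b)} ≤ B₁ ‖u G‖_{q,(a,b)}`.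
If `p < ∞`, put `dσ = w^p dμ` and `dτ = u^q dν`. Covering `{g > t}` by countably many
half-lines `[x,b)` that start at good points gives the distributional inequality
`σ{g > t} ≤ B₁^p τ{G > t}^{p/q}` (`meas_gt_le`). Summing it over the dyadic levels `t = 2^k`, and
using `∑ a_k^r ≤ (∑ a_k)^r` with `r = p/q ≥ 1`, yields the claim (`lintegral_rpow_le`).
No `σ`-finiteness is needed, since only countably many null sets occur.
-/

open MeasureTheory Set ENNReal

noncomputable section

/-- The `μ`-essential supremum of `f` over `E`:
`‖f‖_{∞,E,μ} = sup {α : μ({y ∈ E : f y ≥ α}) > 0}`. -/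
def eSup (μ : Measure ℝ) (E : Set ℝ) (f : ℝ → ℝ≥0∞) : ℝ≥0∞ :=
  sSup {α : ℝ≥0∞ | 0 < μ {y | y ∈ E ∧ α ≤ f y}}

/-- `‖f‖_{p,E,μ}` for `0 < p ≤ ∞`. -/
def Nrm (p : ℝ≥0∞) (μ : Measure ℝ) (E : Set ℝ) (f : ℝ → ℝ≥0∞) : ℝ≥0∞ :=
  if p = ⊤ then eSup μ E f
  else (∫⁻ x in E, f x ^ p.toReal ∂μ) ^ (1 / p.toReal)

/-- `‖u(x) ‖g‖_{∞,(a,x),μ}‖_{q,(a,b),ν}`. -/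
def RHSdual (q : ℝ≥0∞) (a b : ℝ) (μ ν : Measure ℝ) (u g : ℝ → ℝ≥0∞) : ℝ≥0∞ :=
  Nrm q ν (Ioo a b) (fun x => u x * eSup μ (Ioo a x) g)

/-- The best constant in the inequality
`‖gw‖_{p,(a,b),μ} ≤ c ‖u(x) ‖g‖_{∞,(a,x),μ}‖_{q,(a,b),ν}` over all `g ∈ B⁺((a,b))`. -/
def bestCdual (p q : ℝ≥0∞) (a b : ℝ) (μ ν : Measure ℝ) (w u : ℝ → ℝ≥0∞) : ℝ≥0∞ :=
  sInf {c : ℝ≥0∞ | ∀ g : ℝ → ℝ≥0∞, Measurable g →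
    Nrm p μ (Ioo a b) (fun t => g t * w t) ≤ c * RHSdual q a b μ ν u g}

/-! ### Essential suprema -/

lemma eSup_eq_essSup (μ : Measure ℝ) {E : Set ℝ} (hE : MeasurableSet E) (f : ℝ → ℝ≥0∞) :
    eSup μ E f = essSup f (μ.restrict E) := by
  have key : ∀ α, μ {y | y ∈ E ∧ α ≤ f y} = μ.restrict E {y | α ≤ f y} := by
    intro α
    rw [Measure.restrict_apply' hE]
    congr 1
    ext y
    simp [and_comm]
  apply le_antisymm
  · apply sSup_le
    intro α hα
    simp only [mem_ofPred_eq, key] at hα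
    by_contra! hlt
    have h := ENNReal.ae_le_essSup (μ := μ.restrict E) f
    have h0 : μ.restrict E {y | α ≤ f y} = 0 := by
      refine measure_mono_null ?_ h
      intro y hy hle
      exact absurd (hlt.trans_le (le_trans hy hle)) (lt_irrefl _)
    exact hα.ne' h0
  · refine le_of_forall_lt fun α hα => ?_
    obtain ⟨β, h1, h2⟩ := exists_between hα
    refine h1.trans_le (le_sSup ?_)
    simp only [mem_ofPred_eq, key]
    refine pos_iff_ne_zero.2 fun h0 => absurd h2 (not_lt.2 (essSup_le_of_ae_le _ ?_))
    refine measure_mono_null ?_ h0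
    intro y hy
    exact (not_le.1 (show ¬ f y ≤ β from hy)).le

lemma ae_le_eSup (μ : Measure ℝ) {E : Set ℝ} (hE : MeasurableSet E) (f : ℝ → ℝ≥0∞) :
    ∀ᵐ x ∂μ, x ∈ E → f x ≤ eSup μ E f := by
  rw [eSup_eq_essSup μ hE, ← ae_restrict_iff' hE]
  exact ENNReal.ae_le_essSup f

lemma eSup_le_of_ae (μ : Measure ℝ) {E : Set ℝ} (hE : MeasurableSet E) {f : ℝ → ℝ≥0∞}
    {c : ℝ≥0∞} (h : ∀ᵐ x ∂μ, x ∈ E → f x ≤ c) : eSup μ E f ≤ c := by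
  rw [eSup_eq_essSup μ hE]
  exact essSup_le_of_ae_le _ ((ae_restrict_iff' hE).2 h)

lemma eSup_mono_set (μ : Measure ℝ) {E F : Set ℝ} (h : E ⊆ F) (f : ℝ → ℝ≥0∞) :
    eSup μ E f ≤ eSup μ F f :=
  sSup_le_sSup fun _ hα => lt_of_lt_of_le hα (measure_mono (ofPred_subset_ofPred.2 fun _ hy => ⟨h hy.1, hy.2⟩))

lemma monotone_eSup_Ioo (μ : Measure ℝ) (a : ℝ) (g : ℝ → ℝ≥0∞) :
    Monotone fun x => eSup μ (Ioo a x) g :=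
  fun _ _ h => eSup_mono_set μ (Ioo_subset_Ioo_right h) g

/-- Almost every `x` satisfies `g x ≤ ‖g‖_{∞,(a,y),μ}` for all `y > x` simultaneously: it suffices
to check rational `y`, by monotonicity. -/
lemma ae_le_eSup_Ioo (μ : Measure ℝ) (a : ℝ) (g : ℝ → ℝ≥0∞) :
    ∀ᵐ x ∂μ, a < x → ∀ y, x < y → g x ≤ eSup μ (Ioo a y) g := by
  have h : ∀ᵐ x ∂μ, ∀ s : ℚ, x ∈ Ioo a (s : ℝ) → g x ≤ eSup μ (Ioo a (s : ℝ)) g :=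
    ae_all_iff.2 fun s => ae_le_eSup μ measurableSet_Ioo g
  filter_upwards [h] with x hx hax y hxy
  obtain ⟨s, hs1, hs2⟩ := exists_rat_btwn hxy
  exact (hx s ⟨hax, hs1⟩).trans (monotone_eSup_Ioo μ a g hs2.le)

lemma exists_countable_coinitial (S : Set ℝ) :
    ∃ T ⊆ S, T.Countable ∧ ∀ x ∈ S, ∃ t ∈ T, t ≤ x := by
  by_cases hmin : ∃ m ∈ S, ∀ x ∈ S, m ≤ x
  · obtain ⟨m, hm, h⟩ := hmin
    exact ⟨{m}, by simpa using hm, countable_singleton m, fun x hx => ⟨m, rfl, h x hx⟩⟩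
  · push Not at hmin
    have : ∀ r : {r : ℚ // ∃ s ∈ S, s < (r : ℝ)}, ∃ s ∈ S, s < ((r : ℚ) : ℝ) := fun r => r.2
    choose f hf hfr using this
    refine ⟨range f, range_subset_iff.2 hf, countable_range f, ?_⟩
    intro x hx
    obtain ⟨y, hy, hyx⟩ := hmin x hx
    obtain ⟨r, hr1, hr2⟩ := exists_rat_btwn hyx
    exact ⟨f ⟨r, y, hy, hr1⟩, mem_range_self _, ((hfr ⟨r, y, hy, hr1⟩).trans hr2).le⟩

/-- Almost everywhere `w x ≤ ‖w‖_{∞,[x,b),μ}`; countably many starting points suffice at each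
rational level. -/
lemma ae_le_eSup_Ico (μ : Measure ℝ) (b : ℝ) (w : ℝ → ℝ≥0∞) :
    ∀ᵐ x ∂μ, x < b → w x ≤ eSup μ (Ico x b) w := by
  have h : ∀ r : ℚ, ∀ᵐ x ∂μ, x < b → eSup μ (Ico x b) w ≤ (Real.toNNReal r : ℝ≥0∞) →
      w x ≤ (Real.toNNReal r : ℝ≥0∞) := by
    intro r
    obtain ⟨T, hTS, hT, hcof⟩ := exists_countable_coinitial
      {x | eSup μ (Ico x b) w ≤ (Real.toNNReal r : ℝ≥0∞)}
    have h2 : ∀ᵐ x ∂μ, ∀ t ∈ T, x ∈ Ico t b → w x ≤ eSup μ (Ico t b) w :=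
      (ae_ball_iff hT).2 fun t _ => ae_le_eSup μ measurableSet_Ico w
    filter_upwards [h2] with x hx hxb hle
    obtain ⟨t, ht, htx⟩ := hcof x hle
    exact (hx t ht ⟨htx, hxb⟩).trans (hTS ht)
  filter_upwards [ae_all_iff.2 h] with x hx hxb
  by_contra! hlt
  obtain ⟨r, _, hr1, hr2⟩ := ENNReal.lt_iff_exists_rat_btwn.1 hlt
  exact absurd hr2 (not_lt.2 (hx r hxb hr1.le))

/-! ### The distributional inequality -/

/-- The distributional inequality: `{g > t}` is covered by countably many half-lines `[x, ∞)`
with `x` good, and for each of them `(x, ∞) ⊆ {G > t}`. -/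
lemma meas_gt_le {σ τ : Measure ℝ} {g G : ℝ → ℝ≥0∞} {K : ℝ≥0∞} {r : ℝ} (hr : 0 ≤ r)
    (h : ∀ᵐ x ∂σ, (∀ y, x < y → g x ≤ G y) ∧ σ (Ici x) ≤ K * τ (Ioi x) ^ r) (t : ℝ≥0∞) :
    σ {x | t < g x} ≤ K * τ {x | t < G x} ^ r := by
  obtain ⟨T, hTS, hT, hcof⟩ := exists_countable_coinitial
    {x | t < g x ∧ (∀ y, x < y → g x ≤ G y) ∧ σ (Ici x) ≤ K * τ (Ioi x) ^ r}
  have h1 : σ {x | t < g x} ≤ σ (⋃ s ∈ T, Ici s) := by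
    refine measure_mono_ae ?_
    filter_upwards [h] with x hx htx
    obtain ⟨s, hs, hsx⟩ := hcof x ⟨htx, hx⟩
    exact mem_iUnion₂.2 ⟨s, hs, hsx⟩
  refine h1.trans ?_
  rw [measure_biUnion_eq_iSup hT]
  · refine iSup₂_le fun s hs => ?_
    obtain ⟨h2, h3, h4⟩ := hTS hs
    refine h4.trans ?_
    gcongr
    intro y hy
    exact lt_of_lt_of_le h2 (h3 y hy)
  · intro x hx y hy
    rcases le_total x y with hxy | hxy
    · exact ⟨x, hx, Subset.rfl, Ici_subset_Ici.2 hxy⟩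
    · exact ⟨y, hy, Ici_subset_Ici.2 hxy, Subset.rfl⟩

/-! ### Dyadic summation -/

/-- The dyadic truncation `∑_k 2^{kp} 1_{2^k < x}`, comparable to `x^p`. -/
def dy (p : ℝ) (k : ℤ) (x : ℝ≥0∞) : ℝ≥0∞ :=
  (Ioi ((2 : ℝ≥0∞) ^ k)).indicator (fun _ => ((2 : ℝ≥0∞) ^ k) ^ p) x

lemma rpow_le_dy {p : ℝ} (hp : 0 < p) (x : ℝ≥0∞) : x ^ p ≤ 2 ^ p * ∑' k, dy p k x := by
  rcases eq_or_ne x 0 with rfl | h0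
  · simp [hp]
  rcases eq_or_ne x ⊤ with rfl | ht
  · have h : ∑' k, dy p k ⊤ = ⊤ := by
      rw [eq_top_iff]
      calc ⊤ = ∑' _ : ℕ, (1 : ℝ≥0∞) := (ENNReal.tsum_const_eq_top_of_ne_zero one_ne_zero).symm
        _ ≤ ∑' n : ℕ, dy p (n : ℤ) ⊤ := by
          refine ENNReal.tsum_le_tsum fun n => ?_
          have : ((2 : ℝ≥0∞) ^ (n : ℤ)) < ⊤ := by
            rw [zpow_natCast]; exact ENNReal.pow_lt_top (by simp)
          rw [dy, indicator_of_mem (by exact this), zpow_natCast]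
          exact ENNReal.one_le_rpow (one_le_pow₀ one_le_two) hp
        _ ≤ _ := ENNReal.tsum_comp_le_tsum_of_injective Nat.cast_injective _
    rw [h, ENNReal.mul_top (by simp)]
    exact le_top
  obtain ⟨n, hn1, hn2⟩ := ENNReal.exists_mem_Ioc_zpow h0 ht (y := 2) (by norm_num) (by simp)
  calc x ^ p ≤ ((2 : ℝ≥0∞) ^ (n + 1)) ^ p := by gcongr
    _ = 2 ^ p * ((2 : ℝ≥0∞) ^ n) ^ p := by
      rw [← ENNReal.mul_rpow_of_nonneg _ _ hp.le, ENNReal.zpow_add (by simp) (by simp), zpow_one,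
        mul_comm]
    _ = 2 ^ p * dy p n x := by rw [dy, indicator_of_mem (by exact hn1)]
    _ ≤ _ := by gcongr; exact ENNReal.le_tsum n

lemma dy_le_rpow {q : ℝ} (hq : 0 < q) (x : ℝ≥0∞) :
    ∑' k, dy q k x ≤ (1 - (2⁻¹ : ℝ≥0∞) ^ q)⁻¹ * x ^ q := by
  rcases eq_or_ne x 0 with rfl | h0
  · simp [dy]
  rcases eq_or_ne x ⊤ with rfl | ht
  · rw [ENNReal.top_rpow_of_pos hq, ENNReal.mul_top]
    · exact le_top
    · exact ENNReal.inv_ne_zero.2 (ne_top_of_le_ne_top one_ne_top tsub_le_self)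
  obtain ⟨n, hn1, hn2⟩ := ENNReal.exists_mem_Ioc_zpow h0 ht (y := 2) (by norm_num) (by simp)
  have hinj : Function.Injective fun j : ℕ => n - (j : ℤ) := by
    intro i j h
    simpa using h
  rw [← hinj.tsum_eq]
  · calc ∑' j : ℕ, dy q (n - (j : ℤ)) x ≤ ∑' j : ℕ, ((2⁻¹ : ℝ≥0∞) ^ q) ^ j * x ^ q := by
          refine ENNReal.tsum_le_tsum fun j => ?_
          refine (indicator_le_self' (fun _ _ => zero_le) _).trans ?_
          have h1 : ((2⁻¹ : ℝ≥0∞) ^ q) ^ j = ((2⁻¹ : ℝ≥0∞) ^ j) ^ q := by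
            rw [← ENNReal.rpow_natCast, ← ENNReal.rpow_natCast, ← ENNReal.rpow_mul,
              ← ENNReal.rpow_mul, mul_comm]
          rw [h1, ← ENNReal.mul_rpow_of_nonneg _ _ hq.le]
          gcongr
          rw [ENNReal.zpow_sub (by simp) (by simp), zpow_natCast, mul_comm, ← ENNReal.inv_pow]
          gcongr
      _ = _ := by rw [ENNReal.tsum_mul_right, ENNReal.tsum_geometric]
  · intro k hk
    have hk' : (2 : ℝ≥0∞) ^ k < x := by
      by_contra hcon
      exact hk (indicator_of_notMem (by exact hcon) _)
    have hkn : k ≤ n := by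
      by_contra! hlt
      have : (2 : ℝ≥0∞) ^ (n + 1) ≤ 2 ^ k := ENNReal.zpow_le_of_le (by norm_num) (by omega)
      exact absurd (hk'.trans_le (hn2.trans this)) (lt_irrefl _)
    refine ⟨(n - k).toNat, ?_⟩
    simp only
    omega

lemma measurable_dy (p : ℝ) (k : ℤ) : Measurable (dy p k) :=
  measurable_const.indicator measurableSet_Ioi

lemma lintegral_dy {σ : Measure ℝ} {g : ℝ → ℝ≥0∞} (hg : Measurable g) (p : ℝ) (k : ℤ) :
    ∫⁻ x, dy p k (g x) ∂σ = ((2 : ℝ≥0∞) ^ k) ^ p * σ {x | (2 : ℝ≥0∞) ^ k < g x} := by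
  rw [← lintegral_indicator_const (measurableSet_lt measurable_const hg)]
  rfl

lemma tsum_rpow_le {ι : Type*} (a : ι → ℝ≥0∞) {r : ℝ} (hr : 1 ≤ r) :
    ∑' i, a i ^ r ≤ (∑' i, a i) ^ r := by
  have h : ∀ x : ℝ≥0∞, x ^ r = x * x ^ (r - 1) := by
    intro x
    conv_rhs => rw [← ENNReal.rpow_one x, ← ENNReal.rpow_mul, one_mul,
      ← ENNReal.rpow_add_of_nonneg _ _ zero_le_one (sub_nonneg.2 hr)]
    congr 1
    ring
  rw [h (∑' i, a i), ← ENNReal.tsum_mul_right]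
  refine ENNReal.tsum_le_tsum fun i => ?_
  rw [h (a i)]
  exact mul_le_mul_right (ENNReal.rpow_le_rpow (ENNReal.le_tsum i) (sub_nonneg.2 hr)) _

/-- The distributional inequality, summed over dyadic levels. -/
lemma lintegral_rpow_le {σ τ : Measure ℝ} {g G : ℝ → ℝ≥0∞} (hg : Measurable g)
    (hG : Measurable G) {K : ℝ≥0∞} {p q : ℝ} (hq : 0 < q) (hqp : q ≤ p)
    (h : ∀ᵐ x ∂σ, (∀ y, x < y → g x ≤ G y) ∧ σ (Ici x) ≤ K * τ (Ioi x) ^ (p / q)) :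
    ∫⁻ x, g x ^ p ∂σ ≤
      2 ^ p * (K * ((1 - (2⁻¹ : ℝ≥0∞) ^ q)⁻¹ * ∫⁻ x, G x ^ q ∂τ) ^ (p / q)) := by
  have hp : 0 < p := hq.trans_le hqp
  have hr : 0 ≤ p / q := by positivity
  calc ∫⁻ x, g x ^ p ∂σ ≤ ∫⁻ x, 2 ^ p * ∑' k, dy p k (g x) ∂σ :=
        lintegral_mono fun x => rpow_le_dy hp _
    _ = 2 ^ p * ∑' k : ℤ, ((2 : ℝ≥0∞) ^ k) ^ p * σ {x | (2 : ℝ≥0∞) ^ k < g x} := by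
      rw [lintegral_const_mul' _ _ (by simp),
        lintegral_tsum fun k => (show Measurable fun x => dy p k (g x) from
          (measurable_dy p k).comp hg).aemeasurable]
      simp_rw [← lintegral_dy hg]
    _ ≤ 2 ^ p * ∑' k : ℤ, K *
        (((2 : ℝ≥0∞) ^ k) ^ q * τ {x | (2 : ℝ≥0∞) ^ k < G x}) ^ (p / q) := by
      refine mul_le_mul_right (ENNReal.tsum_le_tsum fun k => ?_) _
      rw [ENNReal.mul_rpow_of_nonneg _ _ hr, ← ENNReal.rpow_mul, mul_div_cancel₀ _ hq.ne',
        mul_left_comm]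
      gcongr
      exact meas_gt_le hr h _
    _ ≤ 2 ^ p * (K * (∑' k : ℤ,
        ((2 : ℝ≥0∞) ^ k) ^ q * τ {x | (2 : ℝ≥0∞) ^ k < G x}) ^ (p / q)) := by
      rw [ENNReal.tsum_mul_left]
      gcongr
      exact tsum_rpow_le _ ((one_le_div hq).2 hqp)
    _ ≤ _ := by
      gcongr
      simp_rw [← lintegral_dy hG]
      rw [← lintegral_tsum fun k => (show Measurable fun x => dy q k (G x) from
        (measurable_dy q k).comp hG).aemeasurable,
        ← lintegral_const_mul _ (hG.pow_const q)]
      exact lintegral_mono fun x => dy_le_rpow hq _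

/-! ### Elementary properties of the norms -/

lemma Nrm_top (μ : Measure ℝ) (E : Set ℝ) (f : ℝ → ℝ≥0∞) : Nrm ⊤ μ E f = eSup μ E f := if_pos rfl

lemma Nrm_of_ne {p : ℝ≥0∞} (hp : p ≠ ⊤) (μ : Measure ℝ) (E : Set ℝ) (f : ℝ → ℝ≥0∞) :
    Nrm p μ E f = (∫⁻ x in E, f x ^ p.toReal ∂μ) ^ (1 / p.toReal) := if_neg hp

lemma Nrm_mono_set (p : ℝ≥0∞) (μ : Measure ℝ) {E F : Set ℝ} (h : E ⊆ F) (f : ℝ → ℝ≥0∞) :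
    Nrm p μ E f ≤ Nrm p μ F f := by
  by_cases hp : p = ⊤
  · subst hp
    simpa only [Nrm_top] using eSup_mono_set μ h f
  · rw [Nrm_of_ne hp, Nrm_of_ne hp]
    gcongr

/-- Monotonicity of the norm in function and set together: if `f ≤ h` pointwise on `E`
and `f` vanishes on the rest of `F ⊇ E`, the norm of `f` over `F` is at most that of `h` over
`E`. -/
lemma Nrm_le_of_zero {p : ℝ≥0∞} (hp : 0 < p) (μ : Measure ℝ) {E F : Set ℝ} (hE : MeasurableSet E)
    (hF : MeasurableSet F) (hEF : E ⊆ F) {f h : ℝ → ℝ≥0∞} (h1 : ∀ x ∈ E, f x ≤ h x)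
    (h0 : ∀ x ∈ F, x ∉ E → f x = 0) : Nrm p μ F f ≤ Nrm p μ E h := by
  by_cases ht : p = ⊤
  · subst ht
    rw [Nrm_top, Nrm_top]
    refine eSup_le_of_ae μ hF ?_
    filter_upwards [ae_le_eSup μ hE h] with x hx hxF
    by_cases hxE : x ∈ E
    · exact (h1 x hxE).trans (hx hxE)
    · simp [h0 x hxF hxE]
  · have hpos : 0 < p.toReal := ENNReal.toReal_pos hp.ne' ht
    rw [Nrm_of_ne ht, Nrm_of_ne ht]
    refine ENNReal.rpow_le_rpow ?_ (by positivity)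
    rw [← lintegral_indicator hE, ← lintegral_indicator hF]
    refine lintegral_mono fun x => ?_
    by_cases hxE : x ∈ E
    · rw [indicator_of_mem (hEF hxE), indicator_of_mem hxE]
      exact ENNReal.rpow_le_rpow (h1 x hxE) hpos.le
    · rw [indicator_of_notMem hxE]
      by_cases hxF : x ∈ F
      · rw [indicator_of_mem hxF, h0 x hxF hxE, ENNReal.zero_rpow_of_pos hpos]
      · rw [indicator_of_notMem hxF]

lemma const_mul_Nrm_le {p : ℝ≥0∞} (hp : 0 < p) (μ : Measure ℝ) {E : Set ℝ} (hE : MeasurableSet E)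
    {f h : ℝ → ℝ≥0∞} (hf : Measurable f) {c : ℝ≥0∞} (h1 : ∀ x ∈ E, c * f x ≤ h x) :
    c * Nrm p μ E f ≤ Nrm p μ E h := by
  by_cases ht : p = ⊤
  · subst ht
    rw [Nrm_top, Nrm_top, eSup_eq_essSup μ hE, ← ENNReal.essSup_const_mul,
      ← eSup_eq_essSup μ hE]
    refine eSup_le_of_ae μ hE ?_
    filter_upwards [ae_le_eSup μ hE h] with x hx hxE
    exact (h1 x hxE).trans (hx hxE)
  · have hpos : 0 < p.toReal := ENNReal.toReal_pos hp.ne' ht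
    rw [Nrm_of_ne ht, Nrm_of_ne ht]
    calc c * (∫⁻ x in E, f x ^ p.toReal ∂μ) ^ (1 / p.toReal)
        = (∫⁻ x in E, (c * f x) ^ p.toReal ∂μ) ^ (1 / p.toReal) := by
          simp_rw [ENNReal.mul_rpow_of_nonneg _ _ hpos.le]
          rw [lintegral_const_mul _ (hf.pow_const _),
            ENNReal.mul_rpow_of_nonneg _ _ (by positivity), ← ENNReal.rpow_mul,
            mul_one_div_cancel hpos.ne', ENNReal.rpow_one]
      _ ≤ _ := by
          refine ENNReal.rpow_le_rpow ?_ (by positivity)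
          exact setLIntegral_mono' hE fun x hx => ENNReal.rpow_le_rpow (h1 x hx) hpos.le

/-! ### The lower bound -/

/-- Testing the inequality with `g = 1_{[x,b)}`. -/
lemma lower_bound {p q : ℝ≥0∞} (hq : 0 < q) (hp : 0 < p) {a b : ℝ} {μ ν : Measure ℝ}
    {w u : ℝ → ℝ≥0∞} {c : ℝ≥0∞} (h : ∀ g : ℝ → ℝ≥0∞, Measurable g →
      Nrm p μ (Ioo a b) (fun t => g t * w t) ≤ c * RHSdual q a b μ ν u g) :
    eSup μ (Ioo a b) (fun x => Nrm p μ (Ico x b) w * (Nrm q ν (Ioo x b) u)⁻¹) ≤ c := by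
  refine eSup_le_of_ae μ measurableSet_Ioo (.of_forall fun x hx => ?_)
  have hg : Measurable ((Ico x b).indicator fun _ => (1 : ℝ≥0∞)) :=
    measurable_const.indicator measurableSet_Ico
  have hsub : Ico x b ⊆ Ioo a b := fun y hy => ⟨hx.1.trans_le hy.1, hy.2⟩
  have h1 : Nrm p μ (Ico x b) w ≤ c * Nrm q ν (Ioo x b) u := by
    calc Nrm p μ (Ico x b) w
        ≤ Nrm p μ (Ico x b) (fun t => (Ico x b).indicator (fun _ => (1 : ℝ≥0∞)) t * w t) := by
          refine Nrm_le_of_zero hp μ measurableSet_Ico measurableSet_Ico Subset.rfl ?_ ?_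
          · intro y hy
            simp [indicator_of_mem hy]
          · intro y hy hy'
            exact absurd hy hy'
      _ ≤ _ := Nrm_mono_set p μ hsub _
      _ ≤ _ := h _ hg
      _ ≤ c * Nrm q ν (Ioo x b) u := by
          gcongr
          refine Nrm_le_of_zero hq ν measurableSet_Ioo measurableSet_Ioo
            (Ioo_subset_Ioo_left hx.1.le) ?_ ?_
          · intro y _
            refine mul_le_of_le_one_right zero_le ?_
            refine eSup_le_of_ae μ measurableSet_Ioo (.of_forall fun z _ => ?_)
            exact indicator_le_self' (fun _ _ => zero_le) z
          · intro y hy hy'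
            have hyx : y ≤ x := by
              by_contra! hlt
              exact hy' ⟨hlt, hy.2⟩
            have : eSup μ (Ioo a y) ((Ico x b).indicator fun _ => (1 : ℝ≥0∞)) ≤ 0 := by
              refine eSup_le_of_ae μ measurableSet_Ioo (.of_forall fun z hz => ?_)
              rw [indicator_of_notMem]
              exact fun hz' => absurd (hz.2.trans_le hyx) (not_lt.2 hz'.1)
            rw [nonpos_iff_eq_zero.1 this, mul_zero]
  calc Nrm p μ (Ico x b) w * (Nrm q ν (Ioo x b) u)⁻¹
      ≤ c * Nrm q ν (Ioo x b) u * (Nrm q ν (Ioo x b) u)⁻¹ := by gcongr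
    _ = c * (Nrm q ν (Ioo x b) u / Nrm q ν (Ioo x b) u) := by rw [mul_assoc, div_eq_mul_inv]
    _ ≤ c := mul_le_of_le_one_right zero_le ENNReal.div_self_le_one

/-! ### The upper bound -/

/-- An admissible constant in `c ≤ C₂ B₁`, for given `p` and `q`. -/
def cst (p q : ℝ≥0∞) : ℝ≥0∞ :=
  if p = ⊤ then 1 else 2 * ((1 - (2⁻¹ : ℝ≥0∞) ^ q.toReal)⁻¹) ^ (1 / q.toReal)

lemma cst_ne_top {p q : ℝ≥0∞} (hq : 0 < q) (hqp : q ≤ p) : cst p q < ⊤ := by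
  unfold cst
  split_ifs with h
  · exact one_lt_top
  · have hpos : 0 < q.toReal := ENNReal.toReal_pos hq.ne' (ne_top_of_le_ne_top h hqp)
    refine ENNReal.mul_lt_top (by simp) (ENNReal.rpow_lt_top_of_nonneg (by positivity) ?_)
    refine ENNReal.inv_ne_top.2 (tsub_pos_of_lt ?_).ne'
    exact ENNReal.rpow_lt_one (by simp) hpos

lemma cst_ne_zero {p q : ℝ≥0∞} : cst p q ≠ 0 := by
  unfold cst
  split_ifs with h
  · exact one_ne_zero
  · refine mul_ne_zero (by simp) ?_
    have h1 : (1 : ℝ≥0∞) ≤ (1 - (2⁻¹ : ℝ≥0∞) ^ q.toReal)⁻¹ :=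
      ENNReal.one_le_inv.2 tsub_le_self
    have h2 : (1 : ℝ≥0∞) ≤ ((1 - (2⁻¹ : ℝ≥0∞) ^ q.toReal)⁻¹) ^ (1 / q.toReal) := by
      simpa using ENNReal.rpow_le_rpow h1 (show (0 : ℝ) ≤ 1 / q.toReal by positivity)
    exact (zero_lt_one.trans_le h2).ne'

lemma upper_bound {p q : ℝ≥0∞} (hq : 0 < q) (hqp : q ≤ p) {a b : ℝ} {μ ν : Measure ℝ}
    {w u : ℝ → ℝ≥0∞} (hw : Measurable w) (hu : Measurable u)
    (hfin : ∀ t ∈ Ioo a b, Nrm q ν (Ico t b) u < ⊤) {B : ℝ≥0∞} (hB : B ≠ ⊤)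
    (h : eSup μ (Ioo a b) (fun x => Nrm p μ (Ico x b) w * (Nrm q ν (Ioo x b) u)⁻¹) ≤ B)
    {g : ℝ → ℝ≥0∞} (hg : Measurable g) :
    Nrm p μ (Ioo a b) (fun t => g t * w t) ≤ cst p q * B * RHSdual q a b μ ν u g := by
  have hgood : ∀ᵐ x ∂μ, x ∈ Ioo a b →
      Nrm p μ (Ico x b) w ≤ B * Nrm q ν (Ioo x b) u := by
    filter_upwards [ae_le_eSup μ (measurableSet_Ioo (a := a) (b := b))
      (fun x => Nrm p μ (Ico x b) w * (Nrm q ν (Ioo x b) u)⁻¹)] with x hx hxI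
    have h2 : Nrm q ν (Ioo x b) u ≠ ⊤ :=
      ((Nrm_mono_set q ν Ioo_subset_Ico_self u).trans_lt (hfin x hxI)).ne
    have h3 := (hx hxI).trans h
    rw [← div_eq_mul_inv] at h3
    exact (ENNReal.div_le_iff_le_mul (Or.inr hB) (Or.inl h2)).1 h3
  have hgG := ae_le_eSup_Ioo μ a g
  unfold RHSdual
  set G : ℝ → ℝ≥0∞ := fun x => eSup μ (Ioo a x) g with hGdef
  have hG : Measurable G := (monotone_eSup_Ioo μ a g).measurable
  by_cases hp : p = ⊤
  · subst hp
    simp only [cst, if_true, one_mul]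
    rw [Nrm_top]
    refine eSup_le_of_ae μ measurableSet_Ioo ?_
    filter_upwards [hgood, hgG, ae_le_eSup_Ico μ b w] with x hx hxG hxw hxI
    calc g x * w x ≤ g x * (B * Nrm q ν (Ioo x b) u) := by
          gcongr
          refine (hxw hxI.2).trans ?_
          rw [← Nrm_top]
          exact hx hxI
      _ = B * (g x * Nrm q ν (Ioo x b) u) := by rw [mul_left_comm]
      _ ≤ B * Nrm q ν (Ioo x b) (fun x => u x * G x) := by
          gcongr
          refine const_mul_Nrm_le hq ν measurableSet_Ioo hu fun y hy => ?_
          rw [mul_comm]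
          gcongr
          exact hxG hxI.1 y hy.1
      _ ≤ _ := by
          gcongr
          exact Nrm_mono_set q ν (Ioo_subset_Ioo_left hxI.1.le) _
  · have hqt : q ≠ ⊤ := ne_top_of_le_ne_top hp hqp
    have hp0 : 0 < p.toReal := ENNReal.toReal_pos (hq.trans_le hqp).ne' hp
    have hq0 : 0 < q.toReal := ENNReal.toReal_pos hq.ne' hqt
    have hqp' : q.toReal ≤ p.toReal := ENNReal.toReal_mono hp hqp
    set P := p.toReal
    set Q := q.toReal
    set σ := (μ.restrict (Ioo a b)).withDensity (fun x => w x ^ P) with hσ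
    set τ := (ν.restrict (Ioo a b)).withDensity (fun x => u x ^ Q) with hτ
    have hσi : ∀ x ∈ Ioo a b, σ (Ici x) = ∫⁻ y in Ico x b, w y ^ P ∂μ := by
      intro x hx
      rw [hσ, withDensity_apply _ measurableSet_Ici, Measure.restrict_restrict measurableSet_Ici]
      congr 2
      ext y
      simp only [mem_inter_iff, mem_Ici, mem_Ioo, mem_Ico]
      exact ⟨fun h => ⟨h.1, h.2.2⟩, fun h => ⟨h.1, hx.1.trans_le h.1, h.2⟩⟩
    have hτi : ∀ x ∈ Ioo a b, τ (Ioi x) = ∫⁻ y in Ioo x b, u y ^ Q ∂ν := by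
      intro x hx
      rw [hτ, withDensity_apply _ measurableSet_Ioi, Measure.restrict_restrict measurableSet_Ioi]
      congr 2
      ext y
      simp only [mem_inter_iff, mem_Ioi, mem_Ioo]
      exact ⟨fun h => ⟨h.1, h.2.2⟩, fun h => ⟨h.1, hx.1.trans h.1, h.2⟩⟩
    have hae : ∀ᵐ x ∂σ, (∀ y, x < y → g x ≤ G y) ∧
        σ (Ici x) ≤ B ^ P * τ (Ioi x) ^ (P / Q) := by
      refine (withDensity_absolutelyContinuous _ _).ae_le ?_
      refine (ae_restrict_iff' measurableSet_Ioo).2 ?_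
      filter_upwards [hgood, hgG] with x hx hxG hxI
      refine ⟨hxG hxI.1, ?_⟩
      have h1 := hx hxI
      rw [Nrm_of_ne hp, Nrm_of_ne hqt, ← hσi x hxI, ← hτi x hxI] at h1
      have h2 := ENNReal.rpow_le_rpow h1 hp0.le
      rwa [ENNReal.mul_rpow_of_nonneg _ _ hp0.le, ← ENNReal.rpow_mul, ← ENNReal.rpow_mul,
        one_div_mul_cancel hp0.ne', ENNReal.rpow_one, one_div_mul_eq_div] at h2
    have hmain := lintegral_rpow_le hg hG hq0 hqp' hae
    have hL : ∫⁻ x, g x ^ P ∂σ = ∫⁻ x in Ioo a b, (g x * w x) ^ P ∂μ := by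
      rw [hσ, lintegral_withDensity_eq_lintegral_mul _ (hw.pow_const P) (hg.pow_const P)]
      refine lintegral_congr fun x => ?_
      rw [Pi.mul_apply, mul_comm, ENNReal.mul_rpow_of_nonneg _ _ hp0.le]
    have hR : ∫⁻ x, G x ^ Q ∂τ = ∫⁻ x in Ioo a b, (u x * G x) ^ Q ∂ν := by
      rw [hτ, lintegral_withDensity_eq_lintegral_mul _ (hu.pow_const Q) (hG.pow_const Q)]
      refine lintegral_congr fun x => ?_
      rw [Pi.mul_apply, ENNReal.mul_rpow_of_nonneg _ _ hq0.le]
    rw [hL, hR] at hmain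
    rw [Nrm_of_ne hp, Nrm_of_ne hqt, cst, if_neg hp]
    refine (ENNReal.rpow_le_rpow hmain (by positivity : 0 ≤ 1 / P)).trans (le_of_eq ?_)
    have hP1 : (0 : ℝ) ≤ 1 / P := by positivity
    have hQ1 : (0 : ℝ) ≤ 1 / Q := by positivity
    have hPQ : P / Q * (1 / P) = 1 / Q := by field_simp
    rw [ENNReal.mul_rpow_of_nonneg _ _ hP1, ENNReal.mul_rpow_of_nonneg _ _ hP1,
      ← ENNReal.rpow_mul, ← ENNReal.rpow_mul, ← ENNReal.rpow_mul, hPQ,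
      mul_one_div_cancel hp0.ne', ENNReal.rpow_one, ENNReal.rpow_one,
      ENNReal.mul_rpow_of_nonneg _ _ hQ1]
    ring

/-- Theorem 4.1 (i): for `0 < q ≤ p ≤ ∞`, the inequality
`‖gw‖_{p,(a,b),μ} ≤ c ‖u(x) ‖g‖_{∞,(a,x),μ}‖_{q,(a,b),ν}` holds for all `g ∈ B⁺((a,b))`
iff `B₁ = ‖ ‖w‖_{p,[x,b),μ} ‖u‖_{q,(x,b),ν}⁻¹ ‖_{∞,(a,b),μ} < ∞`, and the best constant
satisfies `c ≈ B₁` with equivalence constants depending only on `p` and `q`. -/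
theorem statement8 (p q : ℝ≥0∞) (hq : 0 < q) (hqp : q ≤ p) :
    ∃ C₁ C₂ : ℝ≥0∞, 0 < C₁ ∧ C₂ < ⊤ ∧
      ∀ (a b : ℝ), a < b →
      ∀ (μ ν : Measure ℝ) (w u : ℝ → ℝ≥0∞),
        Measurable w → Measurable u →
        (∀ t ∈ Ioo a b, Nrm q ν (Ico t b) u < ⊤) →
        (∀ᵐ x ∂ν.restrict (Ioo a b), u x ≠ 0) →
        ((∃ c : ℝ≥0∞, 0 < c ∧ c < ⊤ ∧ ∀ g : ℝ → ℝ≥0∞, Measurable g →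
            Nrm p μ (Ioo a b) (fun t => g t * w t) ≤ c * RHSdual q a b μ ν u g) ↔
          eSup μ (Ioo a b)
            (fun x => Nrm p μ (Ico x b) w * (Nrm q ν (Ioo x b) u)⁻¹) < ⊤) ∧
        C₁ * eSup μ (Ioo a b)
            (fun x => Nrm p μ (Ico x b) w * (Nrm q ν (Ioo x b) u)⁻¹) ≤
          bestCdual p q a b μ ν w u ∧
        bestCdual p q a b μ ν w u ≤
          C₂ * eSup μ (Ioo a b)
            (fun x => Nrm p μ (Ico x b) w * (Nrm q ν (Ioo x b) u)⁻¹) := by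
  have hp : 0 < p := hq.trans_le hqp
  refine ⟨1, cst p q, zero_lt_one, cst_ne_top hq hqp, ?_⟩
  intro a b _ μ ν w u hw hu hfin _
  set B := eSup μ (Ioo a b)
    (fun x => Nrm p μ (Ico x b) w * (Nrm q ν (Ioo x b) u)⁻¹) with hBdef
  refine ⟨⟨?_, ?_⟩, ?_, ?_⟩
  · rintro ⟨c, _, hc, h⟩
    exact (lower_bound hq hp h).trans_lt hc
  · intro hB
    -- the summand `1` only makes the constant positive when `B = 0`
    refine ⟨cst p q * B + 1, by simp,
      ENNReal.add_lt_top.2 ⟨ENNReal.mul_lt_top (cst_ne_top hq hqp) hB, one_lt_top⟩, ?_⟩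
    intro g hg
    refine (upper_bound hq hqp hw hu hfin hB.ne le_rfl hg).trans ?_
    gcongr
    exact le_self_add
  · rw [one_mul]
    exact le_sInf fun c hc => lower_bound hq hp hc
  · rcases eq_or_ne B ⊤ with hB | hB
    · rw [hB, ENNReal.mul_top cst_ne_zero]
      exact le_top
    · exact sInf_le fun g hg => upper_bound hq hqp hw hu hfin hB le_rfl hg
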